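/- Context erasure: let C ∈ PC and let V be a pomset with V ⊑ C[1], where 1 is the empty pomset. Then there exists C' ∈ PC such that C' ⊑ C and C'[1] = V; moreover, if V ∈ SP then C' can be chosen in PC^sp. -/

import Mathlib

namespace CKAH

open Classical

/-! ### Labelled posets and pomsets -/

/-- A labelled poset over alphabet `A`: a finite carrier with a partial order and labelling. -/
structure LPoset (A : Type) : Type 1 where
  carrier : Type
  [fin : Fintype carrier]
  [ord : PartialOrder carrier]
  lab : carrier → A

attribute [instance] LPoset.fin LPoset.ord

/-- Isomorphism of labelled posets: an order isomorphism preserving labels. -/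
def LPoset.Iso {A : Type} (u v : LPoset A) : Prop :=
  ∃ e : u.carrier ≃o v.carrier, ∀ x, v.lab (e x) = u.lab x

theorem LPoset.iso_equivalence (A : Type) : Equivalence (LPoset.Iso (A := A)) where
  refl u := ⟨OrderIso.refl _, fun _ => rfl⟩
  symm := by
    rintro u v ⟨e, he⟩
    exact ⟨e.symm, fun x => by rw [← he (e.symm x), OrderIso.apply_symm_apply]⟩
  trans := by
    rintro u v w ⟨e, he⟩ ⟨f, hf⟩
    exact ⟨e.trans f, fun x => by rw [OrderIso.trans_apply, hf, he]⟩

instance pomSetoid (A : Type) : Setoid (LPoset A) := ⟨LPoset.Iso, LPoset.iso_equivalence A⟩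

/-- A pomset is an isomorphism class of labelled posets. -/
def Pomset (A : Type) : Type 1 := Quotient (pomSetoid A)

/-- Sequential composition of labelled posets: disjoint union, everything on the left
below everything on the right (lexicographic sum order). -/
def LPoset.seqL {A : Type} (u v : LPoset A) : LPoset A where
  carrier := u.carrier ⊕ₗ v.carrier
  fin := inferInstanceAs (Fintype (u.carrier ⊕ v.carrier))
  lab := fun x => Sum.elim u.lab v.lab (ofLex x)

/-- Parallel composition of labelled posets: disjoint union with no cross ordering. -/
def LPoset.parL {A : Type} (u v : LPoset A) : LPoset A where
  carrier := u.carrier ⊕ v.carrier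
  lab := Sum.elim u.lab v.lab

def Pomset.seq {A : Type} : Pomset A → Pomset A → Pomset A :=
  Quotient.map₂ LPoset.seqL (by
    rintro u₁ u₂ ⟨e, he⟩ v₁ v₂ ⟨f, hf⟩
    refine ⟨(RelIso.sumLexCongr e f :
      (u₁.carrier ⊕ₗ v₁.carrier) ≃o (u₂.carrier ⊕ₗ v₂.carrier)), ?_⟩
    rintro (x | x)
    · exact he x
    · exact hf x)

/-- Order isomorphism between disjoint-union orders, from component isomorphisms. -/
def sumOrderIso {α β γ δ : Type} [PartialOrder α] [PartialOrder β] [PartialOrder γ]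
    [PartialOrder δ] (e : α ≃o γ) (f : β ≃o δ) : (α ⊕ β) ≃o (γ ⊕ δ) where
  toEquiv := Equiv.sumCongr e.toEquiv f.toEquiv
  map_rel_iff' := by
    rintro (x | x) (y | y) <;> simp [Sum.le_def, e.le_iff_le, f.le_iff_le]

def Pomset.par {A : Type} : Pomset A → Pomset A → Pomset A :=
  Quotient.map₂ LPoset.parL (by
    rintro u₁ u₂ ⟨e, he⟩ v₁ v₂ ⟨f, hf⟩
    refine ⟨sumOrderIso e f, ?_⟩
    rintro (x | x)
    · exact he x
    · exact hf x)

def LPoset.emptyL (A : Type) : LPoset A := { carrier := Fin 0, lab := fun x => x.elim0 }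

def LPoset.singleL {A : Type} (a : A) : LPoset A := { carrier := PUnit, lab := fun _ => a }

/-- The empty pomset `1`. -/
def Pomset.empty (A : Type) : Pomset A := ⟦LPoset.emptyL A⟧

/-- The single-letter pomset. -/
def Pomset.single {A : Type} (a : A) : Pomset A := ⟦LPoset.singleL a⟧

/-- Subsumption on labelled posets: `u ⊑ v` iff there is a label-preserving
order-preserving bijection from the carrier of `v` to that of `u`. -/
def LPoset.subL {A : Type} (u v : LPoset A) : Prop :=
  ∃ h : v.carrier ≃ u.carrier,
    (∀ x, u.lab (h x) = v.lab x) ∧ ∀ x y : v.carrier, x ≤ y → h x ≤ h y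

/-- Subsumption of pomsets: `Pomset.sub U V` means `U ⊑ V`. -/
def Pomset.sub {A : Type} : Pomset A → Pomset A → Prop :=
  Quotient.lift₂ LPoset.subL (by
    rintro u₁ v₁ u₂ v₂ ⟨e, he⟩ ⟨f, hf⟩
    refine propext ⟨?_, ?_⟩
    · rintro ⟨h, hl, hm⟩
      refine ⟨(f.toEquiv.symm.trans h).trans e.toEquiv, fun x => ?_, fun x y hxy => ?_⟩
      · show u₂.lab (e (h (f.symm x))) = v₂.lab x
        rw [he, hl, ← hf (f.symm x), OrderIso.apply_symm_apply]
      · simp only [Equiv.trans_apply]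
        exact e.le_iff_le.mpr (hm _ _ (f.symm.le_iff_le.mpr hxy))
    · rintro ⟨h, hl, hm⟩
      refine ⟨(f.toEquiv.trans h).trans e.toEquiv.symm, fun x => ?_, fun x y hxy => ?_⟩
      · show u₁.lab (e.symm (h (f x))) = v₁.lab x
        rw [← he (e.symm (h (f x))), OrderIso.apply_symm_apply, hl, hf]
      · simp only [Equiv.trans_apply]
        exact e.symm.le_iff_le.mpr (hm _ _ (f.le_iff_le.mpr hxy)))

def LPoset.isWordL {A : Type} (u : LPoset A) : Prop := ∀ x y : u.carrier, x ≤ y ∨ y ≤ x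

/-- A pomset is a word when it is totally ordered. -/
def Pomset.IsWord {A : Type} : Pomset A → Prop :=
  Quotient.lift LPoset.isWordL (by
    rintro u v ⟨e, -⟩
    refine propext ⟨fun h x y => ?_, fun h x y => ?_⟩
    · rcases h (e.symm x) (e.symm y) with h' | h'
      · exact Or.inl (e.symm.le_iff_le.mp h')
      · exact Or.inr (e.symm.le_iff_le.mp h')
    · rcases h (e x) (e y) with h' | h'
      · exact Or.inl (e.le_iff_le.mp h')
      · exact Or.inr (e.le_iff_le.mp h'))

def LPoset.mapL {A B : Type} (f : A → B) (u : LPoset A) : LPoset B :=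
  { carrier := u.carrier, lab := f ∘ u.lab }

/-- Relabelling of pomsets along a function on letters. -/
def Pomset.map {A B : Type} (f : A → B) : Pomset A → Pomset B :=
  Quotient.map (LPoset.mapL f)
    (by rintro u v ⟨e, he⟩; exact ⟨e, fun x => congrArg f (he x)⟩)

def LPoset.overL {A : Type} (Γ : Set A) (u : LPoset A) : Prop := ∀ x, u.lab x ∈ Γ

/-- All labels of the pomset belong to `Γ`. -/
def Pomset.Over {A : Type} (Γ : Set A) : Pomset A → Prop :=
  Quotient.lift (LPoset.overL Γ) (by
    rintro u v ⟨e, he⟩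
    refine propext ⟨fun h x => ?_, fun h x => ?_⟩
    · have h2 := he (e.symm x)
      rw [OrderIso.apply_symm_apply] at h2
      rw [h2]; exact h _
    · rw [← he x]; exact h _)

/-- Series-parallel pomsets. -/
inductive Pomset.IsSP {A : Type} : Pomset A → Prop
  | empty : Pomset.IsSP (Pomset.empty A)
  | single (a : A) : Pomset.IsSP (Pomset.single a)
  | seq {U V : Pomset A} : Pomset.IsSP U → Pomset.IsSP V → Pomset.IsSP (Pomset.seq U V)
  | par {U V : Pomset A} : Pomset.IsSP U → Pomset.IsSP V → Pomset.IsSP (Pomset.par U V)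

def SPset (A : Type) : Set (Pomset A) := {U | U.IsSP}

/-! ### Pomset contexts -/

/-- Contexts are pomsets over `Option A`, where `none` plays the role of `*`.
`uniqueStarL` says there is exactly one `*`-labelled node. -/
def LPoset.uniqueStarL {A : Type} (c : LPoset (Option A)) : Prop := ∃! x, c.lab x = none

theorem LPoset.uniqueStarL_congr {A : Type} {u v : LPoset (Option A)}
    (e : u.carrier ≃o v.carrier) (he : ∀ x, v.lab (e x) = u.lab x) :
    u.uniqueStarL ↔ v.uniqueStarL := by
  constructor
  · rintro ⟨x, hx, hux⟩
    refine ⟨e x, show v.lab (e x) = none by rw [he]; exact hx, fun y hy => ?_⟩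
    have h2 := he (e.symm y)
    rw [OrderIso.apply_symm_apply] at h2
    have h3 : e.symm y = x := hux _ (h2.symm.trans hy)
    rw [← h3, OrderIso.apply_symm_apply]
  · rintro ⟨x, hx, hvx⟩
    refine ⟨e.symm x, ?_, fun y hy => ?_⟩
    · show u.lab (e.symm x) = none
      have h2 := he (e.symm x)
      rw [OrderIso.apply_symm_apply] at h2
      rw [← h2]; exact hx
    · have h3 : e y = x := hvx _ (show v.lab (e y) = none by rw [he]; exact hy)
      rw [← h3, OrderIso.symm_apply_apply]

/-- A pomset context: exactly one node labelled `*`. -/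
def Pomset.IsCtx {A : Type} : Pomset (Option A) → Prop :=
  Quotient.lift LPoset.uniqueStarL
    (fun _ _ h => propext (LPoset.uniqueStarL_congr h.choose h.choose_spec))

/-- Series-parallel pomset contexts. -/
def Pomset.IsSPCtx {A : Type} (C : Pomset (Option A)) : Prop := C.IsCtx ∧ C.IsSP

/-- Sequential (totally ordered) pomset contexts. -/
def Pomset.IsSeqCtx {A : Type} (C : Pomset (Option A)) : Prop := C.IsCtx ∧ C.IsWord

/-- The trivial context `*`. -/
def starCtx (A : Type) : Pomset (Option A) := Pomset.single (none : Option A)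

theorem option_get_eq_get {α : Type} {o₁ o₂ : Option α} (h : o₁ = o₂) (h₁ : o₁.isSome)
    (h₂ : o₂.isSome) : o₁.get h₁ = o₂.get h₂ := by subst h; rfl

/-- The order of `C[U]`: the orders of `C` (restricted away from `*`) and of `U`, with a
point of `C` below (resp. above) all of `U` when it is below (resp. above) the unique
`*`-node of `C`.  (For well-definedness of the order, the cross-relations are guarded by
the requirement that the star node is unique, which holds for every genuine context.) -/
def LPoset.insLe {A : Type} (c : LPoset (Option A)) (u : LPoset A) :
    ({x : c.carrier // c.lab x ≠ none} ⊕ u.carrier) →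
    ({x : c.carrier // c.lab x ≠ none} ⊕ u.carrier) → Prop
  | Sum.inl x, Sum.inl y => x.val ≤ y.val
  | Sum.inr x, Sum.inr y => x ≤ y
  | Sum.inl x, Sum.inr _ => c.uniqueStarL ∧ ∃ s, c.lab s = none ∧ x.val ≤ s
  | Sum.inr _, Sum.inl y => c.uniqueStarL ∧ ∃ s, c.lab s = none ∧ s ≤ y.val

/-- Insertion of a labelled poset `u` into the gap of a context `c`: the `*`-labelled
node is removed and `u` is put in its place, inheriting the order relations of `*`. -/
noncomputable def LPoset.insL {A : Type} (c : LPoset (Option A)) (u : LPoset A) :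
    LPoset A where
  carrier := {x : c.carrier // c.lab x ≠ none} ⊕ u.carrier
  fin := by classical exact inferInstance
  ord :=
    { le := LPoset.insLe c u
      lt := fun p q => LPoset.insLe c u p q ∧ ¬ LPoset.insLe c u q p
      lt_iff_le_not_ge := fun _ _ => Iff.rfl
      le_refl := by rintro (x | x) <;> exact le_refl _
      le_trans := by
        rintro (x | x) (y | y) (z | z) h1 h2
        · exact le_trans h1 h2
        · obtain ⟨hu, s, hs, hys⟩ := h2
          exact ⟨hu, s, hs, le_trans h1 hys⟩
        · obtain ⟨hu, s, hs, hxs⟩ := h1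
          obtain ⟨-, t, ht, htz⟩ := h2
          obtain ⟨w, hw, huniq⟩ := hu
          have hst : s = t := (huniq s hs).trans (huniq t ht).symm
          exact le_trans (hst ▸ hxs) htz
        · exact h1
        · obtain ⟨hu, s, hs, hsy⟩ := h1
          exact ⟨hu, s, hs, le_trans hsy h2⟩
        · obtain ⟨hu, s, hs, hsy⟩ := h1
          obtain ⟨-, t, ht, hyt⟩ := h2
          obtain ⟨w, hw, huniq⟩ := hu
          have hst : s = t := (huniq s hs).trans (huniq t ht).symm
          have hy : y.val = s := le_antisymm (hst.symm ▸ hyt) hsy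
          exact absurd (hy.symm ▸ hs) y.prop
        · exact h2
        · exact le_trans h1 h2
      le_antisymm := by
        rintro (x | x) (y | y) h1 h2
        · exact congrArg Sum.inl (Subtype.ext (le_antisymm h1 h2))
        · obtain ⟨hu, s, hs, hxs⟩ := h1
          obtain ⟨-, t, ht, htx⟩ := h2
          obtain ⟨w, hw, huniq⟩ := hu
          have hst : s = t := (huniq s hs).trans (huniq t ht).symm
          have hx : x.val = s := le_antisymm hxs (hst.symm ▸ htx)
          exact absurd (hx.symm ▸ hs) x.prop
        · obtain ⟨hu, s, hs, hsy⟩ := h1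
          obtain ⟨-, t, ht, hyt⟩ := h2
          obtain ⟨w, hw, huniq⟩ := hu
          have hst : s = t := (huniq s hs).trans (huniq t ht).symm
          have hy : y.val = s := le_antisymm (hst.symm ▸ hyt) hsy
          exact absurd (hy.symm ▸ hs) y.prop
        · exact congrArg Sum.inr (le_antisymm h1 h2) }
  lab := Sum.elim (fun x => (c.lab x.val).get (Option.isSome_iff_ne_none.mpr x.prop)) u.lab

/-- `Pomset.ins C U` is `C[U]`: plugging the pomset `U` into the gap of the context `C`. -/
noncomputable def Pomset.ins {A : Type} : Pomset (Option A) → Pomset A → Pomset A :=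
  Quotient.map₂ LPoset.insL (by
    rintro c₁ c₂ ⟨e, he⟩ u₁ u₂ ⟨f, hf⟩
    have hstar : c₁.uniqueStarL ↔ c₂.uniqueStarL := LPoset.uniqueStarL_congr e he
    refine ⟨{ toEquiv := Equiv.sumCongr
                (e.toEquiv.subtypeEquiv fun x => by
                  rw [show c₂.lab (e.toEquiv x) = c₁.lab x from he x]) f.toEquiv
              map_rel_iff' := ?_ }, ?_⟩
    · rintro (x | x) (y | y)
      · exact e.le_iff_le
      · show (c₂.uniqueStarL ∧ ∃ s, c₂.lab s = none ∧ (e x.val : c₂.carrier) ≤ s) ↔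
             (c₁.uniqueStarL ∧ ∃ s, c₁.lab s = none ∧ x.val ≤ s)
        constructor
        · rintro ⟨hu, s, hs, hxs⟩
          refine ⟨hstar.mpr hu, e.symm s, ?_, ?_⟩
          · have h2 := he (e.symm s)
            rw [OrderIso.apply_symm_apply] at h2
            rw [← h2]; exact hs
          · exact e.le_iff_le.mp (by rw [OrderIso.apply_symm_apply]; exact hxs)
        · rintro ⟨hu, s, hs, hxs⟩
          exact ⟨hstar.mp hu, e s, by rw [he]; exact hs, e.le_iff_le.mpr hxs⟩
      · show (c₂.uniqueStarL ∧ ∃ s, c₂.lab s = none ∧ s ≤ (e y.val : c₂.carrier)) ↔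
             (c₁.uniqueStarL ∧ ∃ s, c₁.lab s = none ∧ s ≤ y.val)
        constructor
        · rintro ⟨hu, s, hs, hsy⟩
          refine ⟨hstar.mpr hu, e.symm s, ?_, ?_⟩
          · have h2 := he (e.symm s)
            rw [OrderIso.apply_symm_apply] at h2
            rw [← h2]; exact hs
          · exact e.le_iff_le.mp (by rw [OrderIso.apply_symm_apply]; exact hsy)
        · rintro ⟨hu, s, hs, hsy⟩
          exact ⟨hstar.mp hu, e s, by rw [he]; exact hs, e.le_iff_le.mpr hsy⟩
      · exact f.le_iff_le
    · rintro (x | x)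
      · exact option_get_eq_get (he x.val) _ _
      · exact hf x)

/-! ### Pomset languages -/

abbrev Lang (A : Type) := Set (Pomset A)

def Lang.seq {A : Type} (L K : Lang A) : Lang A :=
  {W | ∃ U ∈ L, ∃ V ∈ K, W = Pomset.seq U V}

def Lang.par {A : Type} (L K : Lang A) : Lang A :=
  {W | ∃ U ∈ L, ∃ V ∈ K, W = Pomset.par U V}

def Lang.pow {A : Type} (L : Lang A) : ℕ → Lang A
  | 0 => {Pomset.empty A}
  | n + 1 => Lang.seq (Lang.pow L n) L

def Lang.star {A : Type} (L : Lang A) : Lang A := ⋃ n, L.pow n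

/-- Application of a context to a language: `C[L] = {C[U] : U ∈ L}`. -/
def Ctx.img {A : Type} (C : Pomset (Option A)) (L : Lang A) : Lang A :=
  {W | ∃ U ∈ L, W = C.ins U}

/-! ### CKA terms and semantics -/

inductive Term (A : Type) : Type
  | zero : Term A
  | one : Term A
  | var : A → Term A
  | add : Term A → Term A → Term A
  | seq : Term A → Term A → Term A
  | par : Term A → Term A → Term A
  | star : Term A → Term A

/-- Pomset language semantics of CKA terms. -/
def Term.lang {A : Type} : Term A → Lang A
  | .zero => ∅
  | .one => {Pomset.empty A}
  | .var a => {Pomset.single a}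
  | .add e f => e.lang ∪ f.lang
  | .seq e f => Lang.seq e.lang f.lang
  | .par e f => Lang.par e.lang f.lang
  | .star e => Lang.star e.lang

/-- Sets of hypotheses: a hypothesis `e ≤ f` is the pair `(e, f)`. -/
abbrev HypSet (A : Type) := Set (Term A × Term A)

/-- The congruence `≡^H` on CKA terms generated by the CKA axioms and the hypotheses `H`
(the constructor `hyp` encodes `e ≦^H f`, i.e. `e + f ≡^H f`, for `e ≤ f ∈ H`). -/
inductive CongH {A : Type} (H : HypSet A) : Term A → Term A → Prop
  | refl (e) : CongH H e e
  | symm {e f} : CongH H e f → CongH H f e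
  | trans {e f g} : CongH H e f → CongH H f g → CongH H e g
  | addCong {e e' f f'} : CongH H e e' → CongH H f f' → CongH H (.add e f) (.add e' f')
  | seqCong {e e' f f'} : CongH H e e' → CongH H f f' → CongH H (.seq e f) (.seq e' f')
  | parCong {e e' f f'} : CongH H e e' → CongH H f f' → CongH H (.par e f) (.par e' f')
  | starCong {e e'} : CongH H e e' → CongH H (.star e) (.star e')
  | addZero (e) : CongH H (.add e .zero) e
  | addIdem (e) : CongH H (.add e e) e
  | addComm (e f) : CongH H (.add e f) (.add f e)
  | addAssoc (e f g) : CongH H (.add e (.add f g)) (.add (.add e f) g)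
  | seqAssoc (e f g) : CongH H (.seq e (.seq f g)) (.seq (.seq e f) g)
  | seqDistL (e f g) : CongH H (.seq e (.add f g)) (.add (.seq e f) (.seq e g))
  | seqDistR (e f g) : CongH H (.seq (.add e f) g) (.add (.seq e g) (.seq f g))
  | seqOneR (e) : CongH H (.seq e .one) e
  | seqOneL (e) : CongH H (.seq .one e) e
  | seqZeroR (e) : CongH H (.seq e .zero) .zero
  | seqZeroL (e) : CongH H (.seq .zero e) .zero
  | parComm (e f) : CongH H (.par e f) (.par f e)
  | parOne (e) : CongH H (.par e .one) e
  | parZero (e) : CongH H (.par e .zero) .zero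
  | parAssoc (e f g) : CongH H (.par e (.par f g)) (.par (.par e f) g)
  | parDist (e f g) : CongH H (.par e (.add f g)) (.add (.par e f) (.par e g))
  | starUnfoldL (e) : CongH H (.add .one (.seq e (.star e))) (.star e)
  | starUnfoldR (e) : CongH H (.add .one (.seq (.star e) e)) (.star e)
  | lfpL {e f g} : CongH H (.add (.add e (.seq f g)) g) g →
      CongH H (.add (.seq (.star f) e) g) g
  | lfpR {e f g} : CongH H (.add (.add e (.seq f g)) f) f →
      CongH H (.add (.seq e (.star g)) f) f
  | hyp {e f} : (e, f) ∈ H → CongH H (.add e f) f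

/-- `e ≦^H f`, the natural order `e + f ≡^H f`. -/
def LeH {A : Type} (H : HypSet A) (e f : Term A) : Prop := CongH H (.add e f) f

/-- The `H`-closure of a pomset language, as an inductive predicate: the smallest language
containing `L` such that for all `e ≤ f ∈ H` and series-parallel contexts `C`,
if `C[⟦f⟧] ⊆ cl` then `C[⟦e⟧] ⊆ cl`. -/
inductive closure {A : Type} (H : HypSet A) (L : Lang A) : Pomset A → Prop
  | base {U} : U ∈ L → closure H L U
  | step {e f : Term A} (hef : (e, f) ∈ H) {C : Pomset (Option A)} (hC : C.IsSPCtx)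
      (hf : ∀ V ∈ f.lang, closure H L (C.ins V)) {U} (hU : U ∈ e.lang) :
      closure H L (C.ins U)

/-- `cl H L` is the `H`-closure of `L`. -/
def cl {A : Type} (H : HypSet A) (L : Lang A) : Lang A := {U | closure H L U}

/-- The sequential closure: like `cl` but only sequential contexts are used. -/
inductive seqClosure {A : Type} (H : HypSet A) (L : Lang A) : Pomset A → Prop
  | base {U} : U ∈ L → seqClosure H L U
  | step {e f : Term A} (hef : (e, f) ∈ H) {C : Pomset (Option A)} (hC : C.IsSeqCtx)
      (hf : ∀ V ∈ f.lang, seqClosure H L (C.ins V)) {U} (hU : U ∈ e.lang) :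
      seqClosure H L (C.ins U)

def seqCl {A : Type} (H : HypSet A) (L : Lang A) : Lang A := {U | seqClosure H L U}

/-! ### Implication, completeness, reductions -/

/-- `H` implies `H'`: every hypothesis of `H'` is derivable from `H`. -/
def Implies {A : Type} (H H' : HypSet A) : Prop := ∀ p ∈ H', LeH H p.1 p.2

/-- `H` is complete: semantic equivalence implies axiomatic equivalence. -/
def Complete {A : Type} (H : HypSet A) : Prop :=
  ∀ e f : Term A, cl H e.lang = cl H f.lang → CongH H e f

/-- A reduction from `H` to `H'` (presupposing that `H` implies `H'`). -/
structure IsReduction {A : Type} (H H' : HypSet A) (r : Term A → Term A) : Prop where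
  implies : Implies H H'
  equiv : ∀ e, CongH H e (r e)
  reflect : ∀ e f : Term A, cl H e.lang = cl H f.lang → cl H' (r e).lang = cl H' (r f).lang

def Reduces {A : Type} (H H' : HypSet A) : Prop := ∃ r, IsReduction H H' r

/-- A strong reduction from `H` to `H'`. -/
structure IsStrongReduction {A : Type} (H H' : HypSet A) (r : Term A → Term A)
    extends IsReduction H H' r : Prop where
  strong : ∀ e : Term A, cl H e.lang = cl H' (r e).lang

def StronglyReduces {A : Type} (H H' : HypSet A) : Prop := ∃ r, IsStrongReduction H H' r

/-- `H` factorises into `H₀` and `H₁`. -/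
def Factorises {A : Type} (H H₀ H₁ : HypSet A) : Prop :=
  Implies H H₀ ∧ Implies H H₁ ∧ ∀ L : Lang A, L ⊆ SPset A → cl H L = cl H₁ (cl H₀ L)

/-! ### The exchange hypotheses and sp-subsumption -/

/-- The exchange hypotheses `(e∥f)·(g∥h) ≤ (e·g)∥(f·h)`. -/
def exch (A : Type) : HypSet A :=
  {p | ∃ e f g h : Term A,
    p = (Term.seq (.par e f) (.par g h), Term.par (.seq e g) (.seq f h))}

/-- `⊑^sp`: the smallest precongruence on series-parallel pomsets satisfying the
exchange inequality. -/
inductive spSub {A : Type} : Pomset A → Pomset A → Prop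
  | refl {U : Pomset A} : U.IsSP → spSub U U
  | trans {U V W} : spSub U V → spSub V W → spSub U W
  | seqCong {U V U' V'} : spSub U V → spSub U' V' → spSub (Pomset.seq U U') (Pomset.seq V V')
  | parCong {U V U' V'} : spSub U V → spSub U' V' → spSub (Pomset.par U U') (Pomset.par V V')
  | exch {U V W X : Pomset A} : U.IsSP → V.IsSP → W.IsSP → X.IsSP →
      spSub (Pomset.seq (Pomset.par U V) (Pomset.par W X))
            (Pomset.par (Pomset.seq U W) (Pomset.seq V X))

/-! ### KA terms, grounded hypotheses, sequential reductions -/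

/-- A term is a KA term when it contains no `∥`. -/
def Term.noPar {A : Type} : Term A → Prop
  | .zero => True
  | .one => True
  | .var _ => True
  | .add e f => e.noPar ∧ f.noPar
  | .seq e f => e.noPar ∧ f.noPar
  | .par _ _ => False
  | .star e => e.noPar

/-- A non-empty word. -/
def IsNonemptyWord {A : Type} (W : Pomset A) : Prop := W.IsWord ∧ W ≠ Pomset.empty A

/-- A set of hypotheses is grounded when in each hypothesis `e ≤ f`, `e` is a KA term and
`⟦f⟧ = {W}` for a non-empty word `W`. -/
def Grounded {A : Type} (H : HypSet A) : Prop :=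
  ∀ p ∈ H, p.1.noPar ∧ ∃ W : Pomset A, IsNonemptyWord W ∧ p.2.lang = {W}

/-- `≡_KA^H`: the congruence on terms generated by the axioms of `≡` not involving `∥`
together with the hypotheses of `H`. -/
inductive KACong {A : Type} (H : HypSet A) : Term A → Term A → Prop
  | refl (e) : KACong H e e
  | symm {e f} : KACong H e f → KACong H f e
  | trans {e f g} : KACong H e f → KACong H f g → KACong H e g
  | addCong {e e' f f'} : KACong H e e' → KACong H f f' → KACong H (.add e f) (.add e' f')
  | seqCong {e e' f f'} : KACong H e e' → KACong H f f' → KACong H (.seq e f) (.seq e' f')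
  | starCong {e e'} : KACong H e e' → KACong H (.star e) (.star e')
  | addZero (e) : KACong H (.add e .zero) e
  | addIdem (e) : KACong H (.add e e) e
  | addComm (e f) : KACong H (.add e f) (.add f e)
  | addAssoc (e f g) : KACong H (.add e (.add f g)) (.add (.add e f) g)
  | seqAssoc (e f g) : KACong H (.seq e (.seq f g)) (.seq (.seq e f) g)
  | seqDistL (e f g) : KACong H (.seq e (.add f g)) (.add (.seq e f) (.seq e g))
  | seqDistR (e f g) : KACong H (.seq (.add e f) g) (.add (.seq e g) (.seq f g))
  | seqOneR (e) : KACong H (.seq e .one) e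
  | seqOneL (e) : KACong H (.seq .one e) e
  | seqZeroR (e) : KACong H (.seq e .zero) .zero
  | seqZeroL (e) : KACong H (.seq .zero e) .zero
  | starUnfoldL (e) : KACong H (.add .one (.seq e (.star e))) (.star e)
  | starUnfoldR (e) : KACong H (.add .one (.seq (.star e) e)) (.star e)
  | lfpL {e f g} : KACong H (.add (.add e (.seq f g)) g) g →
      KACong H (.add (.seq (.star f) e) g) g
  | lfpR {e f g} : KACong H (.add (.add e (.seq f g)) f) f →
      KACong H (.add (.seq e (.star g)) f) f
  | hyp {e f} : (e, f) ∈ H → KACong H (.add e f) f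

/-- A sequential reduction from `H` to `H'`. -/
structure IsSeqReduction {A : Type} (H H' : HypSet A) (r : Term A → Term A) : Prop where
  implies : Implies H H'
  equiv : ∀ e : Term A, e.noPar → KACong H e (r e)
  closure_eq : ∀ e : Term A, e.noPar → seqCl H e.lang = seqCl H' (r e).lang

/-- Extension of a map on (KA) terms to all CKA terms, homomorphically on `∥`. -/
def parExt {A : Type} (r : Term A → Term A) : Term A → Term A
  | .par e f => .par (parExt r e) (parExt r f)
  | e => r e

/-! ### Inductive characterisation of sp contexts -/

/-- The generators of series-parallel contexts (Lemma: `PC^sp` is the smallest such set). -/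
inductive GenCtx {A : Type} : Pomset (Option A) → Prop
  | star : GenCtx (Pomset.single (none : Option A))
  | seqL {U : Pomset A} {C} : U.IsSP → GenCtx C → GenCtx (Pomset.seq (Pomset.map some U) C)
  | seqR {C} {V : Pomset A} : GenCtx C → V.IsSP → GenCtx (Pomset.seq C (Pomset.map some V))
  | par {U : Pomset A} {C} : U.IsSP → GenCtx C → GenCtx (Pomset.par (Pomset.map some U) C)

/-! ### Reification -/

/-- Homomorphic extension of a letter map to terms. -/
def rTerm {A : Type} (r : A → Term A) : Term A → Term A
  | .zero => .zero
  | .one => .one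
  | .var a => r a
  | .add e f => .add (rTerm r e) (rTerm r f)
  | .seq e f => .seq (rTerm r e) (rTerm r f)
  | .par e f => .par (rTerm r e) (rTerm r f)
  | .star e => .star (rTerm r e)

/-- All letters of a term lie in `Γ`. -/
def TermOver {A : Type} (Γ : Set A) : Term A → Prop
  | .zero => True
  | .one => True
  | .var a => a ∈ Γ
  | .add e f => TermOver Γ e ∧ TermOver Γ f
  | .seq e f => TermOver Γ e ∧ TermOver Γ f
  | .par e f => TermOver Γ e ∧ TermOver Γ f
  | .star e => TermOver Γ e

/-- Extension of a letter map `r` to (series-parallel) pomsets, as a relation: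
`rMap r U V` means `V ∈ r(U)`. -/
inductive rMap {A : Type} (r : A → Term A) : Pomset A → Pomset A → Prop
  | one : rMap r (Pomset.empty A) (Pomset.empty A)
  | var (a : A) {V} : V ∈ (r a).lang → rMap r (Pomset.single a) V
  | seq {U U' V V'} : rMap r U V → rMap r U' V' →
      rMap r (Pomset.seq U U') (Pomset.seq V V')
  | par {U U' V V'} : rMap r U V → rMap r U' V' →
      rMap r (Pomset.par U U') (Pomset.par V V')

/-- Image of a language under (the pomset extension of) `r`. -/
def rImg {A : Type} (r : A → Term A) (L : Lang A) : Lang A := {V | ∃ U ∈ L, rMap r U V}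

/-- Series-parallel pomsets over the subalphabet `Γ`. -/
def SPover {A : Type} (Γ : Set A) : Lang A := {U | U.IsSP ∧ U.Over Γ}

/-- `r : Σ → Term Γ` is a reification from `H` to `H'`. -/
structure IsReification {A : Type} (Γ : Set A) (H H' : HypSet A) (r : A → Term A) : Prop where
  toGamma : ∀ a : A, TermOver Γ (r a)
  equiv : ∀ a : A, CongH H (r a) (.var a)
  expansive : ∀ a ∈ Γ, LeH (∅ : HypSet A) (.var a) (r a)
  preserves : ∀ L : Lang A, L ⊆ SPover Γ → cl H' L ⊆ SPover Γ
  hyps : ∀ p ∈ H, LeH H' (rTerm r p.1) (rTerm r p.2)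

end CKAH

namespace CKAH

/-- `c` is `v` plus one star node above all of `D` and below all of `U`. -/
def Good {A : Type} (v : LPoset A) (D U : Set v.carrier) (c : LPoset (Option A)) : Prop :=
  ∃ (f : v.carrier → c.carrier) (s : c.carrier), c.lab s = none ∧
    (∀ x, c.lab (f x) = some (v.lab x)) ∧ (∀ x y, f x ≤ f y ↔ x ≤ y) ∧
    (∀ y, y = s ∨ ∃ x, y = f x) ∧ (∀ d ∈ D, f d ≤ s) ∧ (∀ u ∈ U, s ≤ f u)

def SPGood {A : Type} (v : LPoset A) : Prop :=
  ∀ D U : Set v.carrier, (∀ d ∈ D, ∀ u ∈ U, d < u) →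
    ∃ c : LPoset (Option A), Pomset.IsSP (⟦c⟧ : Pomset (Option A)) ∧ Good v D U c

theorem SPGood_iso {A : Type} {u v : LPoset A} (h : u.Iso v) (hu : SPGood u) : SPGood v := by
  obtain ⟨e, he⟩ := h
  intro D U hDU
  obtain ⟨c, hc, f, s, hs, hl, hf, hsurj, hD, hU⟩ := hu (e ⁻¹' D) (e ⁻¹' U)
    (fun d hd u hu => e.lt_iff_lt.mp (hDU _ hd _ hu))
  refine ⟨c, hc, fun x => f (e.symm x), s, hs, ?_, ?_, ?_, ?_, ?_⟩
  · intro x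
    rw [hl, ← he, OrderIso.apply_symm_apply]
  · intro x y
    rw [hf, e.symm.le_iff_le]
  · intro y
    rcases hsurj y with h | ⟨x, rfl⟩
    · exact Or.inl h
    · exact Or.inr ⟨e x, by simp⟩
  · intro d hd
    exact hD _ (by simpa using hd)
  · intro d hd
    exact hU _ (by simpa using hd)

theorem map_isSP {A B : Type} (g : A → B) {V : Pomset A} (h : V.IsSP) :
    (Pomset.map g V).IsSP := by
  induction h with
  | empty =>
    have : Pomset.map g (Pomset.empty A) = Pomset.empty B :=
      Quotient.sound ⟨OrderIso.refl _, fun x => x.elim0⟩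
    rw [this]; exact .empty
  | single a => exact Pomset.IsSP.single (g a)
  | @seq U V _ _ h1 h2 =>
    have : Pomset.map g (Pomset.seq U V) = Pomset.seq (Pomset.map g U) (Pomset.map g V) := by
      induction U using Quotient.inductionOn
      induction V using Quotient.inductionOn
      refine Quotient.sound ⟨OrderIso.refl _, ?_⟩
      rintro (x | x) <;> rfl
    rw [this]; exact .seq h1 h2
  | @par U V _ _ h1 h2 =>
    have : Pomset.map g (Pomset.par U V) = Pomset.par (Pomset.map g U) (Pomset.map g V) := by
      induction U using Quotient.inductionOn
      induction V using Quotient.inductionOn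
      refine Quotient.sound ⟨OrderIso.refl _, ?_⟩
      rintro (x | x) <;> rfl
    rw [this]; exact .par h1 h2

section
variable {A : Type} {u v : LPoset A}

def sl (u v : LPoset A) (x : u.carrier) : (u.seqL v).carrier := toLex (Sum.inl x)
def sr (u v : LPoset A) (x : v.carrier) : (u.seqL v).carrier := toLex (Sum.inr x)
def pl (u v : LPoset A) (x : u.carrier) : (u.parL v).carrier := Sum.inl x
def pr (u v : LPoset A) (x : v.carrier) : (u.parL v).carrier := Sum.inr x

theorem scases (y : (u.seqL v).carrier) : (∃ x, y = sl u v x) ∨ ∃ x, y = sr u v x := by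
  rcases y with x | x
  · exact Or.inl ⟨x, rfl⟩
  · exact Or.inr ⟨x, rfl⟩
theorem pcases (y : (u.parL v).carrier) : (∃ x, y = pl u v x) ∨ ∃ x, y = pr u v x := by
  rcases y with x | x
  · exact Or.inl ⟨x, rfl⟩
  · exact Or.inr ⟨x, rfl⟩
theorem sll (x y) : sl u v x ≤ sl u v y ↔ x ≤ y := Sum.Lex.inl_le_inl_iff
theorem srr (x y) : sr u v x ≤ sr u v y ↔ x ≤ y := Sum.Lex.inr_le_inr_iff
theorem slr (x y) : sl u v x ≤ sr u v y := Sum.Lex.inl_le_inr x y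
theorem srl (x y) : ¬ sr u v x ≤ sl u v y := Sum.Lex.not_inr_le_inl
theorem pll (x y) : pl u v x ≤ pl u v y ↔ x ≤ y := Sum.inl_le_inl_iff
theorem prr (x y) : pr u v x ≤ pr u v y ↔ x ≤ y := Sum.inr_le_inr_iff
theorem plr (x y) : ¬ pl u v x ≤ pr u v y := Sum.not_inl_le_inr
theorem prl (x y) : ¬ pr u v x ≤ pl u v y := Sum.not_inr_le_inl
theorem labsl (x) : (u.seqL v).lab (sl u v x) = u.lab x := rfl
theorem labsr (x) : (u.seqL v).lab (sr u v x) = v.lab x := rfl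
theorem labpl (x) : (u.parL v).lab (pl u v x) = u.lab x := rfl
theorem labpr (x) : (u.parL v).lab (pr u v x) = v.lab x := rfl

theorem slt_ll {x y} (h : sl u v x < sl u v y) : x < y := by
  simpa [lt_iff_le_not_ge, sll] using h
theorem slt_rr {x y} (h : sr u v x < sr u v y) : x < y := by
  simpa [lt_iff_le_not_ge, srr] using h
theorem plt_ll {x y} (h : pl u v x < pl u v y) : x < y := by
  simpa [lt_iff_le_not_ge, pll] using h
theorem plt_rr {x y} (h : pr u v x < pr u v y) : x < y := by
  simpa [lt_iff_le_not_ge, prr] using h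

/-- Eliminators. -/
def scase {B : Type} (f : u.carrier → B) (g : v.carrier → B) (y : (u.seqL v).carrier) : B :=
  Sum.elim f g (ofLex y)
def pcase {B : Type} (f : u.carrier → B) (g : v.carrier → B) (y : (u.parL v).carrier) : B :=
  Sum.elim f g y
theorem scase_l {B : Type} (f : u.carrier → B) (g : v.carrier → B) (x) :
    scase f g (sl u v x) = f x := rfl
theorem scase_r {B : Type} (f : u.carrier → B) (g : v.carrier → B) (x) :
    scase f g (sr u v x) = g x := rfl
theorem pcase_l {B : Type} (f : u.carrier → B) (g : v.carrier → B) (x) :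
    pcase f g (pl u v x) = f x := rfl
theorem pcase_r {B : Type} (f : u.carrier → B) (g : v.carrier → B) (x) :
    pcase f g (pr u v x) = g x := rfl

theorem good_after (D : Set v.carrier) :
    Good v D ∅ ((v.mapL some).seqL (LPoset.singleL none)) := by
  refine ⟨fun x => sl (v.mapL some) _ x, sr _ (LPoset.singleL none) PUnit.unit, rfl,
    fun x => rfl, fun x y => sll _ _, ?_, fun d _ => slr _ _, by simp⟩
  intro y
  rcases scases y with ⟨x, rfl⟩ | ⟨x, rfl⟩
  · exact Or.inr ⟨x, rfl⟩
  · exact Or.inl rfl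

theorem good_before (U : Set v.carrier) :
    Good v ∅ U ((LPoset.singleL none).seqL (v.mapL some)) := by
  refine ⟨fun x => sr _ (v.mapL some) x, sl (LPoset.singleL none) _ PUnit.unit, rfl,
    fun x => rfl, fun x y => srr _ _, ?_, by simp, fun d _ => slr _ _⟩
  intro y
  rcases scases y with ⟨x, rfl⟩ | ⟨x, rfl⟩
  · exact Or.inl rfl
  · exact Or.inr ⟨x, rfl⟩

theorem good_seq_left {D U : Set (u.seqL v).carrier} {c : LPoset (Option A)}
    (hD : ∀ x, sr u v x ∉ D) (h : Good u (sl u v ⁻¹' D) (sl u v ⁻¹' U) c) :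
    Good (u.seqL v) D U (c.seqL (v.mapL some)) := by
  obtain ⟨f, s, hs, hl, hf, hsurj, h1, h2⟩ := h
  refine ⟨scase (fun x => sl c (v.mapL some) (f x)) (fun x => sr c (v.mapL some) x),
    sl c (v.mapL some) s, hs, ?_, ?_, ?_, ?_, ?_⟩
  · intro x
    rcases scases x with ⟨x, rfl⟩ | ⟨x, rfl⟩
    · exact hl x
    · rfl
  · intro x y
    rcases scases x with ⟨x, rfl⟩ | ⟨x, rfl⟩ <;> rcases scases y with ⟨y, rfl⟩ | ⟨y, rfl⟩ 
    · exact ((sll _ _).trans (hf _ _)).trans (sll _ _).symm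
    · exact iff_of_true (slr _ _) (slr _ _)
    · exact iff_of_false (srl _ _) (srl _ _)
    · exact (srr (u := c) (v := v.mapL some) x y).trans (srr (u := u) (v := v) x y).symm
  · intro y
    rcases scases y with ⟨y, rfl⟩ | ⟨y, rfl⟩
    · rcases hsurj y with rfl | ⟨x, rfl⟩
      · exact Or.inl rfl
      · exact Or.inr ⟨sl u v x, rfl⟩
    · exact Or.inr ⟨sr u v y, rfl⟩
  · intro d hd
    rcases scases d with ⟨x, rfl⟩ | ⟨x, rfl⟩
    · exact (sll _ _).2 (h1 x hd)
    · exact absurd hd (hD x)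
  · intro d hd
    rcases scases d with ⟨x, rfl⟩ | ⟨x, rfl⟩
    · exact (sll _ _).2 (h2 x hd)
    · exact slr _ _

theorem good_seq_right {D U : Set (u.seqL v).carrier} {c : LPoset (Option A)}
    (hU : ∀ x, sl u v x ∉ U) (h : Good v (sr u v ⁻¹' D) (sr u v ⁻¹' U) c) :
    Good (u.seqL v) D U ((u.mapL some).seqL c) := by
  obtain ⟨f, s, hs, hl, hf, hsurj, h1, h2⟩ := h
  refine ⟨scase (fun x => sl (u.mapL some) c x) (fun x => sr (u.mapL some) c (f x)),
    sr (u.mapL some) c s, hs, ?_, ?_, ?_, ?_, ?_⟩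
  · intro x
    rcases scases x with ⟨x, rfl⟩ | ⟨x, rfl⟩
    · rfl
    · exact hl x
  · intro x y
    rcases scases x with ⟨x, rfl⟩ | ⟨x, rfl⟩ <;> rcases scases y with ⟨y, rfl⟩ | ⟨y, rfl⟩ 
    · exact (sll (u := u.mapL some) (v := c) x y).trans (sll (u := u) (v := v) x y).symm
    · exact iff_of_true (slr _ _) (slr _ _)
    · exact iff_of_false (srl _ _) (srl _ _)
    · exact ((srr _ _).trans (hf _ _)).trans (srr _ _).symm
  · intro y
    rcases scases y with ⟨y, rfl⟩ | ⟨y, rfl⟩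
    · exact Or.inr ⟨sl u v y, rfl⟩
    · rcases hsurj y with rfl | ⟨x, rfl⟩
      · exact Or.inl rfl
      · exact Or.inr ⟨sr u v x, rfl⟩
  · intro d hd
    rcases scases d with ⟨x, rfl⟩ | ⟨x, rfl⟩
    · exact slr _ _
    · exact (srr _ _).2 (h1 x hd)
  · intro d hd
    rcases scases d with ⟨x, rfl⟩ | ⟨x, rfl⟩
    · exact absurd hd (hU x)
    · exact (srr _ _).2 (h2 x hd)

theorem good_par_left {D U : Set (u.parL v).carrier} {c : LPoset (Option A)}
    (hD : ∀ x, pr u v x ∉ D) (hU : ∀ x, pr u v x ∉ U)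
    (h : Good u (pl u v ⁻¹' D) (pl u v ⁻¹' U) c) :
    Good (u.parL v) D U (c.parL (v.mapL some)) := by
  obtain ⟨f, s, hs, hl, hf, hsurj, h1, h2⟩ := h
  refine ⟨pcase (fun x => pl c (v.mapL some) (f x)) (fun x => pr c (v.mapL some) x),
    pl c (v.mapL some) s, hs, ?_, ?_, ?_, ?_, ?_⟩
  · intro x
    rcases pcases x with ⟨x, rfl⟩ | ⟨x, rfl⟩
    · exact hl x
    · rfl
  · intro x y
    rcases pcases x with ⟨x, rfl⟩ | ⟨x, rfl⟩ <;> rcases pcases y with ⟨y, rfl⟩ | ⟨y, rfl⟩ 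
    · exact ((pll _ _).trans (hf _ _)).trans (pll _ _).symm
    · exact iff_of_false (plr _ _) (plr _ _)
    · exact iff_of_false (prl _ _) (prl _ _)
    · exact (prr (u := c) (v := v.mapL some) x y).trans (prr (u := u) (v := v) x y).symm
  · intro y
    rcases pcases y with ⟨y, rfl⟩ | ⟨y, rfl⟩
    · rcases hsurj y with rfl | ⟨x, rfl⟩
      · exact Or.inl rfl
      · exact Or.inr ⟨pl u v x, rfl⟩
    · exact Or.inr ⟨pr u v y, rfl⟩
  · intro d hd
    rcases pcases d with ⟨x, rfl⟩ | ⟨x, rfl⟩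
    · exact (pll _ _).2 (h1 x hd)
    · exact absurd hd (hD x)
  · intro d hd
    rcases pcases d with ⟨x, rfl⟩ | ⟨x, rfl⟩
    · exact (pll _ _).2 (h2 x hd)
    · exact absurd hd (hU x)

theorem good_par_right {D U : Set (u.parL v).carrier} {c : LPoset (Option A)}
    (hD : ∀ x, pl u v x ∉ D) (hU : ∀ x, pl u v x ∉ U)
    (h : Good v (pr u v ⁻¹' D) (pr u v ⁻¹' U) c) :
    Good (u.parL v) D U ((u.mapL some).parL c) := by
  obtain ⟨f, s, hs, hl, hf, hsurj, h1, h2⟩ := h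
  refine ⟨pcase (fun x => pl (u.mapL some) c x) (fun x => pr (u.mapL some) c (f x)),
    pr (u.mapL some) c s, hs, ?_, ?_, ?_, ?_, ?_⟩
  · intro x
    rcases pcases x with ⟨x, rfl⟩ | ⟨x, rfl⟩
    · rfl
    · exact hl x
  · intro x y
    rcases pcases x with ⟨x, rfl⟩ | ⟨x, rfl⟩ <;> rcases pcases y with ⟨y, rfl⟩ | ⟨y, rfl⟩ 
    · exact (pll (u := u.mapL some) (v := c) x y).trans (pll (u := u) (v := v) x y).symm
    · exact iff_of_false (plr _ _) (plr _ _)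
    · exact iff_of_false (prl _ _) (prl _ _)
    · exact ((prr _ _).trans (hf _ _)).trans (prr _ _).symm
  · intro y
    rcases pcases y with ⟨y, rfl⟩ | ⟨y, rfl⟩
    · exact Or.inr ⟨pl u v y, rfl⟩
    · rcases hsurj y with rfl | ⟨x, rfl⟩
      · exact Or.inl rfl
      · exact Or.inr ⟨pr u v x, rfl⟩
  · intro d hd
    rcases pcases d with ⟨x, rfl⟩ | ⟨x, rfl⟩
    · exact absurd hd (hD x)
    · exact (prr _ _).2 (h1 x hd)
  · intro d hd
    rcases pcases d with ⟨x, rfl⟩ | ⟨x, rfl⟩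
    · exact absurd hd (hU x)
    · exact (prr _ _).2 (h2 x hd)

theorem spgood_trivial (hv : Pomset.IsSP (⟦v⟧ : Pomset A)) {D U : Set v.carrier}
    (h : D = ∅ ∨ U = ∅) :
    ∃ c : LPoset (Option A), Pomset.IsSP (⟦c⟧ : Pomset (Option A)) ∧ Good v D U c := by
  rcases h with rfl | rfl
  · exact ⟨_, Pomset.IsSP.seq (.single none) (map_isSP some hv), good_before U⟩
  · exact ⟨_, Pomset.IsSP.seq (map_isSP some hv) (.single none), good_after D⟩

theorem spgood_seq (hu : Pomset.IsSP (⟦u⟧ : Pomset A)) (hv : Pomset.IsSP (⟦v⟧ : Pomset A))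
    (gu : SPGood u) (gv : SPGood v) : SPGood (u.seqL v) := by
  intro D U hDU
  by_cases hD : ∃ x, sr u v x ∈ D
  · obtain ⟨d, hd⟩ := hD
    obtain ⟨c, hc, hg⟩ := gv (sr u v ⁻¹' D) (sr u v ⁻¹' U)
      (fun d hd u hu => slt_rr (hDU _ hd _ hu))
    exact ⟨_, Pomset.IsSP.seq (map_isSP some hu) hc,
      good_seq_right (fun x hx => srl _ _ (hDU _ hd _ hx).le) hg⟩
  · obtain ⟨c, hc, hg⟩ := gu (sl u v ⁻¹' D) (sl u v ⁻¹' U)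
      (fun d hd u hu => slt_ll (hDU _ hd _ hu))
    exact ⟨_, Pomset.IsSP.seq hc (map_isSP some hv),
      good_seq_left (fun x hx => hD ⟨x, hx⟩) hg⟩

theorem spgood_par (hu : Pomset.IsSP (⟦u⟧ : Pomset A)) (hv : Pomset.IsSP (⟦v⟧ : Pomset A))
    (gu : SPGood u) (gv : SPGood v) : SPGood (u.parL v) := by
  intro D U hDU
  by_cases h : D = ∅ ∨ U = ∅
  · exact spgood_trivial (Pomset.IsSP.par hu hv) h
  push Not at h
  obtain ⟨⟨d, hd⟩, ⟨w, hw⟩⟩ := h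
  rcases pcases d with ⟨d, rfl⟩ | ⟨d, rfl⟩
  · have hU : ∀ x, pr u v x ∉ U := fun x hx => plr _ _ (hDU _ hd _ hx).le
    have hD : ∀ x, pr u v x ∉ D := by
      intro x hx
      rcases pcases w with ⟨w, rfl⟩ | ⟨w, rfl⟩
      · exact prl _ _ (hDU _ hx _ hw).le
      · exact hU _ hw
    obtain ⟨c, hc, hg⟩ := gu (pl u v ⁻¹' D) (pl u v ⁻¹' U)
      (fun d hd u hu => plt_ll (hDU _ hd _ hu))
    exact ⟨_, Pomset.IsSP.par hc (map_isSP some hv), good_par_left hD hU hg⟩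
  · have hU : ∀ x, pl u v x ∉ U := fun x hx => prl _ _ (hDU _ hd _ hx).le
    have hD : ∀ x, pl u v x ∉ D := by
      intro x hx
      rcases pcases w with ⟨w, rfl⟩ | ⟨w, rfl⟩
      · exact hU _ hw
      · exact plr _ _ (hDU _ hx _ hw).le
    obtain ⟨c, hc, hg⟩ := gv (pr u v ⁻¹' D) (pr u v ⁻¹' U)
      (fun d hd u hu => plt_rr (hDU _ hd _ hu))
    exact ⟨_, Pomset.IsSP.par (map_isSP some hu) hc, good_par_right hD hU hg⟩

theorem spgood_of_isSP {V : Pomset A} (h : V.IsSP) :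
    ∀ v : LPoset A, (⟦v⟧ : Pomset A) = V → SPGood v := by
  induction h with
  | empty =>
    intro v hv D U _
    refine spgood_trivial (hv ▸ .empty) (Or.inl ?_)
    obtain ⟨e, -⟩ := Quotient.exact hv
    ext x
    exact (e x).elim0
  | single a =>
    intro v hv D U hDU
    refine spgood_trivial (hv ▸ .single a) ?_
    obtain ⟨e, -⟩ := Quotient.exact hv
    by_contra h
    push Not at h
    obtain ⟨⟨d, hd⟩, ⟨w, hw⟩⟩ := h
    have : d = w := e.injective rfl
    exact absurd (hDU _ hd _ hw) (by simp [this])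
  | @seq U V hU hV h1 h2 =>
    intro w hw
    induction U using Quotient.inductionOn with | _ u
    induction V using Quotient.inductionOn with | _ v
    exact SPGood_iso (Quotient.exact hw.symm) (spgood_seq hU hV (h1 u rfl) (h2 v rfl))
  | @par U V hU hV h1 h2 =>
    intro w hw
    induction U using Quotient.inductionOn with | _ u
    induction V using Quotient.inductionOn with | _ v
    exact SPGood_iso (Quotient.exact hw.symm) (spgood_par hU hV (h1 u rfl) (h2 v rfl))

/-- Order used in the general (not necessarily series-parallel) case. -/
def extLe (v : LPoset A) (D U : Set v.carrier) : Option v.carrier → Option v.carrier → Prop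
  | some x, some y => x ≤ y
  | none, none => True
  | some x, none => ∃ d ∈ D, x ≤ d
  | none, some y => ∃ d ∈ U, d ≤ y

theorem good_exists (v : LPoset A) (D U : Set v.carrier) (h : ∀ d ∈ D, ∀ u ∈ U, d < u) :
    ∃ c : LPoset (Option A), Good v D U c := by
  let c : LPoset (Option A) :=
    { carrier := Option v.carrier
      fin := inferInstance
      ord :=
        { le := extLe v D U
          lt := fun p q => extLe v D U p q ∧ ¬ extLe v D U q p
          lt_iff_le_not_ge := fun _ _ => Iff.rfl
          le_refl := by rintro (_ | x) <;> simp [extLe]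
          le_trans := by
            rintro (_ | x) (_ | y) (_ | z) h1 h2
            · trivial
            · exact h2
            · trivial
            · obtain ⟨d, hd, h3⟩ := h1
              exact ⟨d, hd, h3.trans h2⟩
            · exact h1
            · obtain ⟨d, hd, h3⟩ := h1
              obtain ⟨e, he, h4⟩ := h2
              exact (h3.trans (h d hd e he).le).trans h4
            · obtain ⟨d, hd, h3⟩ := h2
              exact ⟨d, hd, le_trans h1 h3⟩
            · exact le_trans (α := v.carrier) h1 h2
          le_antisymm := by
            rintro (_ | x) (_ | y) h1 h2
            · rfl
            · obtain ⟨d, hd, h3⟩ := h1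
              obtain ⟨e, he, h4⟩ := h2
              exact absurd (h3.trans h4) (h e he d hd).not_ge
            · obtain ⟨d, hd, h3⟩ := h1
              obtain ⟨e, he, h4⟩ := h2
              exact absurd (h4.trans h3) (h d hd e he).not_ge
            · exact congrArg some (le_antisymm (α := v.carrier) h1 h2) }
      lab := fun x => x.map v.lab }
  refine ⟨c, (some : v.carrier → Option v.carrier), (none : Option v.carrier), rfl,
    fun x => rfl, fun x y => Iff.rfl, ?_, fun d hd => ⟨d, hd, le_rfl⟩, fun d hd => ⟨d, hd, le_rfl⟩⟩
  rintro (_ | x)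
  · exact Or.inl rfl
  · exact Or.inr ⟨x, rfl⟩

theorem good_isCtx {D U : Set v.carrier} {c : LPoset (Option A)} (h : Good v D U c) :
    c.uniqueStarL := by
  obtain ⟨f, s, hs, hl, hf, hsurj, h1, h2⟩ := h
  refine ⟨s, hs, fun y hy => ?_⟩
  rcases hsurj y with rfl | ⟨x, rfl⟩
  · rfl
  · simp [hl] at hy

theorem good_ins {D U : Set v.carrier} {c : LPoset (Option A)} (h : Good v D U c) :
    v.Iso (c.insL (LPoset.emptyL A)) := by
  obtain ⟨f, s, hs, hl, hf, hsurj, h1, h2⟩ := h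
  have hne : ∀ x, c.lab (f x) ≠ none := fun x => by simp [hl]
  let g : v.carrier → (c.insL (LPoset.emptyL A)).carrier := fun x => Sum.inl ⟨f x, hne x⟩
  have hg : ∀ x y, g x ≤ g y ↔ x ≤ y := hf
  have hinj : Function.Injective g := fun x y hxy =>
    le_antisymm ((hg x y).1 hxy.le) ((hg y x).1 hxy.ge)
  have hsu : Function.Surjective g := by
    rintro (⟨y, hy⟩ | y)
    · rcases hsurj y with rfl | ⟨x, rfl⟩
      · exact absurd hs hy
      · exact ⟨x, rfl⟩
    · exact y.elim0
  refine ⟨⟨Equiv.ofBijective g ⟨hinj, hsu⟩, fun {x y} => hg x y⟩, fun x => ?_⟩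
  show (c.lab (f x)).get _ = v.lab x
  simp [hl]

open Classical in
theorem good_sub {c₀ c : LPoset (Option A)} {s₀ : c₀.carrier} (hs₀ : c₀.lab s₀ = none)
    (hun : ∀ y, c₀.lab y = none → y = s₀)
    (h : (c₀.insL (LPoset.emptyL A)).carrier ≃ v.carrier)
    (hlab : ∀ x, v.lab (h x) = (c₀.insL (LPoset.emptyL A)).lab x)
    (hmono : ∀ x y, x ≤ y → h x ≤ h y)
    (hg : Good v {d | ∃ z hz, z ≤ s₀ ∧ d = h (Sum.inl ⟨z, hz⟩)}
      {d | ∃ z hz, s₀ ≤ z ∧ d = h (Sum.inl ⟨z, hz⟩)} c) : c.subL c₀ := by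
  obtain ⟨f, s, hs, hl, hf, hsurj, h1, h2⟩ := hg
  have finj : Function.Injective f := fun x y hxy =>
    le_antisymm ((hf x y).1 hxy.le) ((hf y x).1 hxy.ge)
  have hfs : ∀ x, f x ≠ s := fun x hx => by
    have := hl x
    rw [hx, hs] at this
    cases this
  let g : c₀.carrier → c.carrier := fun x =>
    if hx : c₀.lab x = none then s else f (h (Sum.inl ⟨x, hx⟩))
  have gs : g s₀ = s := dif_pos hs₀
  have gn : ∀ x (hx : c₀.lab x ≠ none), g x = f (h (Sum.inl ⟨x, hx⟩)) := fun x hx => dif_neg hx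
  have hcase : ∀ x, x = s₀ ∨ c₀.lab x ≠ none := fun x => by
    by_cases hx : c₀.lab x = none
    · exact Or.inl (hun x hx)
    · exact Or.inr hx
  have ginj : Function.Injective g := by
    intro x y hxy
    rcases hcase x with rfl | hx <;> rcases hcase y with rfl | hy
    · rfl
    · rw [gs, gn y hy] at hxy
      exact absurd hxy.symm (hfs _)
    · rw [gs, gn x hx] at hxy
      exact absurd hxy (hfs _)
    · rw [gn x hx, gn y hy] at hxy
      exact congrArg Subtype.val (Sum.inl_injective (h.injective (finj hxy)))
  have gsurj : Function.Surjective g := by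
    intro y
    rcases hsurj y with rfl | ⟨x, rfl⟩
    · exact ⟨s₀, gs⟩
    · obtain ⟨z, rfl⟩ := h.surjective x
      rcases z with ⟨z, hz⟩ | z
      · exact ⟨z, gn z hz⟩
      · exact z.elim0
  refine ⟨Equiv.ofBijective g ⟨ginj, gsurj⟩, fun x => ?_, fun x y hxy => ?_⟩
  · show c.lab (g x) = c₀.lab x
    rcases hcase x with rfl | hx
    · rw [gs, hs, hs₀]
    · rw [gn x hx, hl]
      exact (congrArg some (hlab _)).trans (Option.some_get _)
  · show g x ≤ g y
    rcases hcase x with rfl | hx <;> rcases hcase y with rfl | hy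
    · exact le_rfl
    · rw [gs, gn y hy]
      exact h2 _ ⟨y, hy, hxy, rfl⟩
    · rw [gs, gn x hx]
      exact h1 _ ⟨x, hx, hxy, rfl⟩
    · rw [gn x hx, gn y hy, hf]
      exact hmono _ _ hxy

end

/-- **Context erasure**: if `V ⊑ C[1]` then there is `C' ⊑ C` with `C'[1] = V`;
moreover `C'` can be chosen series-parallel when `V` is. -/
theorem context_erasure (A : Type) (C : Pomset (Option A)) (hC : C.IsCtx)
    (V : Pomset A) (h : Pomset.sub V (C.ins (Pomset.empty A))) :
    ∃ C' : Pomset (Option A), C'.IsCtx ∧ Pomset.sub C' C ∧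
      C'.ins (Pomset.empty A) = V ∧ (V.IsSP → C'.IsSP) := by
  induction C using Quotient.inductionOn with | _ c₀
  induction V using Quotient.inductionOn with | _ v
  obtain ⟨s₀, hs₀, hun⟩ : c₀.uniqueStarL := hC
  obtain ⟨e, hlab, hmono⟩ : v.subL (c₀.insL (LPoset.emptyL A)) := h
  have hDU : ∀ d ∈ {d | ∃ z hz, z ≤ s₀ ∧ d = e (Sum.inl ⟨z, hz⟩)},
      ∀ u ∈ {d | ∃ z hz, s₀ ≤ z ∧ d = e (Sum.inl ⟨z, hz⟩)}, d < u := by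
    rintro _ ⟨z, hz, hzs, rfl⟩ _ ⟨w, hw, hws, rfl⟩
    refine lt_of_le_of_ne (hmono _ _ (show z ≤ w from hzs.trans hws)) (fun heq => hz ?_)
    have hzw : z = w := congrArg Subtype.val (Sum.inl_injective (e.injective heq))
    subst hzw
    rw [le_antisymm hzs hws]
    exact hs₀
  obtain ⟨c, hsp, hg⟩ : ∃ c : LPoset (Option A),
      (Pomset.IsSP (⟦v⟧ : Pomset A) → Pomset.IsSP (⟦c⟧ : Pomset (Option A))) ∧
      Good v _ _ c := by
    by_cases hv : Pomset.IsSP (⟦v⟧ : Pomset A)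
    · obtain ⟨c, hc, hg⟩ := spgood_of_isSP hv v rfl _ _ hDU
      exact ⟨c, fun _ => hc, hg⟩
    · obtain ⟨c, hg⟩ := good_exists v _ _ hDU
      exact ⟨c, fun h => absurd h hv, hg⟩
  exact ⟨⟦c⟧, good_isCtx hg, good_sub hs₀ hun e hlab hmono hg,
    (Quotient.sound (good_ins hg)).symm, hsp⟩

end CKAH
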